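/- arXiv:1303.3767 — 7 statements merged into one kernel-verified Lean document; each statement's English description precedes it below -/
import Mathlib

section
/- Let N ≥ 1 and let x ∈ S_N. Then x contains the pattern [321] (the permutation σ ∈ S_3 with σ(1)=3, σ(2)=2, σ(3)=1) if and only if x factorizes over [321]. (Note ℓ([321]) = 3.) -/
/-!
If `x = z σ' y` is a factorization, then the `y⁻¹`-images of the window are three positions at
which `x` is decreasing, so `x` contains 321.

Conversely, it suffices to find `y` whose inversions are all inversions of `x`, and a window of
three consecutive values, such that `y⁻¹` is increasing and `x y⁻¹` decreasing on the window
(`Reduction`). Indeed, with `σ'` the transposition of the two ends of the window and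
`z = x y⁻¹ σ'`, the permutation `z` is increasing on the window, so the inversions of `σ'` are
inversions of `z σ' = x y⁻¹`. The length is additive on `w y` whenever every inversion of `y` is
an inversion of `w y` (`len_mul_of_inv_subset`); applying this twice gives the factorization.

Such a `y` is found by induction on `r - p`, where `p < q < r` is an occurrence of 321 in `x`. If
`q > p + 1`, then either `x p < x (p + 1)`, and `p` may be replaced by `p + 1`, or `x` has a
descent at `p`, and after composing with the adjacent transposition at `p` the occurrence moves to
`p + 1 < q < r`; a reduction of the new permutation lifts back (`Reduction.of_swap`). The case
`r > q + 1` is symmetric. If `p, q, r` are consecutive, then `y = 1` works.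
-/

/-- Coxeter length of a permutation of `Fin N`: its number of inversions. -/
def len {N : ℕ} (x : Equiv.Perm (Fin N)) : ℕ :=
  (Finset.univ.filter fun p : Fin N × Fin N => p.1 < p.2 ∧ x p.2 < x p.1).card

/-- `x` contains the pattern `σ`. -/
def Contains {N K : ℕ} (x : Equiv.Perm (Fin N)) (σ : Equiv.Perm (Fin K)) : Prop :=
  ∃ f : Fin K → Fin N, StrictMono f ∧ ∀ a b : Fin K, x (f a) < x (f b) ↔ σ a < σ b

/-- `x` factorizes over the pattern `σ`: there is a shift `σ'` of `σ` by `j` and a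
length-additive factorization `x = z ∘ σ' ∘ y` with `y⁻¹` increasing on the window
`{j+1,…,j+k}` and `z` increasing on the window. -/
def FactorizesOver {N K : ℕ} (x : Equiv.Perm (Fin N)) (σ : Equiv.Perm (Fin K)) : Prop :=
  ∃ (j : ℕ) (hj : j + K ≤ N) (σ' y z : Equiv.Perm (Fin N)),
    (∀ t : Fin K, (σ' ⟨j + t.val, by have := t.isLt; omega⟩).val = j + (σ t).val) ∧
    (∀ m : Fin N, (m.val < j ∨ j + K ≤ m.val) → σ' m = m) ∧
    x = z * σ' * y ∧
    len x = len y + len σ + len z ∧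
    (∀ a b : Fin K, a < b →
      y⁻¹ ⟨j + a.val, by have := a.isLt; omega⟩ < y⁻¹ ⟨j + b.val, by have := b.isLt; omega⟩) ∧
    (∀ a b : Fin K, a < b →
      z ⟨j + a.val, by have := a.isLt; omega⟩ < z ⟨j + b.val, by have := b.isLt; omega⟩)

/-- The pattern [321]. -/
def p321 : Equiv.Perm (Fin 3) := ⟨![2, 1, 0], ![2, 1, 0], by decide, by decide⟩

/-- Every inversion of `y`, as a pair of positions, is an inversion of `x`. -/
def InvSubset {N : ℕ} (y x : Equiv.Perm (Fin N)) : Prop :=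
  ∀ a b : Fin N, a < b → y b < y a → x b < x a

/-- The inversions of `w y` that are not inversions of `y` correspond to those of `w` under
`(a, b) ↦ (y a, y b)`, whence the length is additive. -/
lemma len_mul_of_inv_subset {N : ℕ} (w y : Equiv.Perm (Fin N)) (h : InvSubset y (w * y)) :
    len (w * y) = len y + len w := by
  unfold len
  have hw : (Finset.univ.filter fun p : Fin N × Fin N => p.1 < p.2 ∧ w p.2 < w p.1).card
      = (Finset.univ.filter fun p : Fin N × Fin N =>
          (p.1 < p.2 ∧ (w * y) p.2 < (w * y) p.1) ∧ ¬ (y p.2 < y p.1)).card := by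
    symm
    refine Finset.card_bij (fun p _ => (y p.1, y p.2)) ?_ ?_ ?_
    · rintro ⟨a, b⟩ hp
      replace hp := (Finset.mem_filter.1 hp).2
      refine Finset.mem_filter.2 ⟨Finset.mem_univ _, ?_⟩
      have hne : y a ≠ y b := fun e => hp.1.1.ne (y.injective e)
      exact ⟨lt_of_le_of_ne (not_lt.1 hp.2) hne, hp.1.2⟩
    · rintro ⟨a, b⟩ _ ⟨c, d⟩ _ e
      simpa using e
    · rintro ⟨c, d⟩ hp
      simp only [Finset.mem_filter, Finset.mem_univ, true_and] at hp
      have hab : y⁻¹ c < y⁻¹ d := by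
        by_contra hn
        have hne : y⁻¹ d ≠ y⁻¹ c := fun e => hp.1.ne (y⁻¹.injective e).symm
        have := h _ _ (lt_of_le_of_ne (not_lt.1 hn) hne) (by simpa using hp.1)
        exact absurd hp.2 (not_lt_of_gt (by simpa using this))
      refine ⟨(y⁻¹ c, y⁻¹ d), Finset.mem_filter.2 ⟨Finset.mem_univ _, ⟨hab, ?_⟩, ?_⟩, by simp⟩
      · simpa using hp.2
      · simpa using hp.1.le
  have hy : (Finset.univ.filter fun p : Fin N × Fin N => p.1 < p.2 ∧ y p.2 < y p.1)
      = (Finset.univ.filter fun p : Fin N × Fin N =>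
          (p.1 < p.2 ∧ (w * y) p.2 < (w * y) p.1) ∧ y p.2 < y p.1) := by
    ext ⟨a, b⟩
    simp only [Finset.mem_filter, Finset.mem_univ, true_and]
    exact ⟨fun k => ⟨⟨k.1, h a b k.1 k.2⟩, k.2⟩, fun k => ⟨k.1.1, k.2⟩⟩
  rw [hw, hy]
  simp only [← Finset.filter_filter _ (fun p : Fin N × Fin N => y p.2 < y p.1),
    ← Finset.filter_filter _ (fun p : Fin N × Fin N => ¬ (y p.2 < y p.1))]
  exact (Finset.card_filter_add_card_filter_not _).symm

/-- Existence of a right factor `y` of `x` suited to a factorization over 321: the inversions of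
`y` are among those of `x`, and there is a window `c₀, c₁, c₂` of consecutive values on which `y⁻¹`
is increasing and `x y⁻¹` is decreasing. -/
def Reduction {N : ℕ} (x : Equiv.Perm (Fin N)) : Prop :=
  ∃ (y : Equiv.Perm (Fin N)) (c₀ c₁ c₂ : Fin N),
    c₁.val = c₀.val + 1 ∧ c₂.val = c₀.val + 2 ∧ InvSubset y x ∧
    y⁻¹ c₀ < y⁻¹ c₁ ∧ y⁻¹ c₁ < y⁻¹ c₂ ∧ x (y⁻¹ c₁) < x (y⁻¹ c₀) ∧ x (y⁻¹ c₂) < x (y⁻¹ c₁)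

/-- An adjacent transposition reverses the order of no pair but the one it exchanges. -/
lemma swap_lt_swap {N : ℕ} {i k : Fin N} (hk : k.val = i.val + 1) {a b : Fin N} (hab : a < b)
    (h : ¬ (a = i ∧ b = k)) : Equiv.swap i k a < Equiv.swap i k b := by
  simp only [Equiv.swap_apply_def]
  simp only [Fin.ext_iff, Fin.lt_def] at *
  split_ifs <;> simp_all <;> omega

/-- If `x` has a descent at `i`, a reduction of `x sᵢ` yields one of `x`. -/
lemma Reduction.of_swap {N : ℕ} {x : Equiv.Perm (Fin N)} {i k : Fin N} (hk : k.val = i.val + 1)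
    (hd : x k < x i) (h : Reduction (x * Equiv.swap i k)) : Reduction x := by
  obtain ⟨y, c₀, c₁, c₂, h1, h2, hinv, m1, m2, d1, d2⟩ := h
  have hinv' : (y * Equiv.swap i k)⁻¹ = Equiv.swap i k * y⁻¹ := by simp
  -- `x sᵢ` ascends at `i` but descends along the window, so `sᵢ` cannot reverse the window.
  have key : ∀ a b : Fin N, a < b →
      (x * Equiv.swap i k) b < (x * Equiv.swap i k) a →
      Equiv.swap i k a < Equiv.swap i k b := by
    intro a b hab hx
    refine swap_lt_swap hk hab ?_
    rintro ⟨rfl, rfl⟩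
    simp only [Equiv.Perm.mul_apply, Equiv.swap_apply_left, Equiv.swap_apply_right] at hx
    exact absurd hd hx.not_gt
  refine ⟨y * Equiv.swap i k, c₀, c₁, c₂, h1, h2, ?_, ?_, ?_, ?_, ?_⟩
  · intro a b hab hy
    by_cases hc : a = i ∧ b = k
    · rw [hc.1, hc.2]; exact hd
    · simpa using hinv _ _ (swap_lt_swap hk hab hc) hy
  · rw [hinv']; exact key _ _ m1 d1
  · rw [hinv']; exact key _ _ m2 d2
  · rw [hinv']; exact d1
  · rw [hinv']; exact d2

/-- The induction on the spread `r - p ≤ n` of an occurrence `p < q < r` of 321 in `x`: a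
non-consecutive occurrence is tightened, at the cost of an adjacent transposition if need be. -/
lemma reduction_of_occurrence {N : ℕ} (n : ℕ) : ∀ (x : Equiv.Perm (Fin N)) (p q r : Fin N),
    r.val ≤ p.val + n → p < q → q < r → x q < x p → x r < x q → Reduction x := by
  induction n with
  | zero =>
    intro x p q r hn hpq hqr
    simp only [Fin.lt_def] at hpq hqr
    omega
  | succ n ih =>
    intro x p q r hn hpq hqr h1 h2
    have hpq' := Fin.lt_def.1 hpq
    have hqr' := Fin.lt_def.1 hqr
    have hN := r.isLt
    by_cases c1 : p.val + 1 = q.val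
    · by_cases c2 : q.val + 1 = r.val
      · exact ⟨1, p, q, r, by omega, by omega, fun a b hab h => absurd hab h.not_gt,
          hpq, hqr, h1, h2⟩
      · obtain ⟨k, hk⟩ : ∃ k : Fin N, r.val = k.val + 1 := ⟨⟨r.val - 1, by omega⟩, by simp; omega⟩
        have hqk : q < k := by rw [Fin.lt_def]; omega
        have hkr : k ≠ r := by rw [Ne, Fin.ext_iff]; omega
        rcases lt_or_gt_of_ne (x.injective.ne hkr) with hlt | hgt
        · exact ih x p q k (by omega) hpq hqk h1 (hlt.trans h2)
        · refine Reduction.of_swap hk hgt ?_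
          have e1 : Equiv.swap k r p = p :=
            Equiv.swap_apply_of_ne_of_ne (hpq.trans hqk).ne (hpq.trans hqr).ne
          have e2 : Equiv.swap k r q = q := Equiv.swap_apply_of_ne_of_ne hqk.ne hqr.ne
          exact ih _ p q k (by omega) hpq hqk (by simpa [e1, e2] using h1)
            (by simpa [e2] using h2)
    · obtain ⟨k, hk⟩ : ∃ k : Fin N, k.val = p.val + 1 := ⟨⟨p.val + 1, by omega⟩, rfl⟩
      have hkq : k < q := by rw [Fin.lt_def]; omega
      have hkp : k ≠ p := by rw [Ne, Fin.ext_iff]; omega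
      rcases lt_or_gt_of_ne (x.injective.ne hkp) with hlt | hgt
      · refine Reduction.of_swap hk hlt ?_
        have e1 : Equiv.swap p k q = q := Equiv.swap_apply_of_ne_of_ne hpq.ne' hkq.ne'
        have e2 : Equiv.swap p k r = r :=
          Equiv.swap_apply_of_ne_of_ne (hpq.trans hqr).ne' (hkq.trans hqr).ne'
        exact ih _ k q r (by omega) hkq hqr (by simpa [e1] using h1)
          (by simpa [e1, e2] using h2)
      · exact ih x k q r (by omega) hkq hqr (h1.trans hgt) h2

/-- The inversions of the transposition `(c₀ c₂)` of two positions at distance two are the pairs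
inside the window `c₀, c₁, c₂`. -/
lemma swap_inversion_iff {N : ℕ} {c₀ c₁ c₂ : Fin N} (h1 : c₁.val = c₀.val + 1)
    (h2 : c₂.val = c₀.val + 2) (a b : Fin N) :
    (a < b ∧ Equiv.swap c₀ c₂ b < Equiv.swap c₀ c₂ a) ↔
      (a = c₀ ∧ b = c₁) ∨ (a = c₀ ∧ b = c₂) ∨ (a = c₁ ∧ b = c₂) := by
  simp only [Equiv.swap_apply_def]
  simp only [Fin.ext_iff, Fin.lt_def]
  split_ifs <;> omega

lemma len_swap {N : ℕ} {c₀ c₁ c₂ : Fin N} (h1 : c₁.val = c₀.val + 1)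
    (h2 : c₂.val = c₀.val + 2) : len (Equiv.swap c₀ c₂) = 3 := by
  have e : (Finset.univ.filter fun p : Fin N × Fin N =>
      p.1 < p.2 ∧ Equiv.swap c₀ c₂ p.2 < Equiv.swap c₀ c₂ p.1)
      = {(c₀, c₁), (c₀, c₂), (c₁, c₂)} := by
    ext ⟨a, b⟩
    simp [swap_inversion_iff h1 h2]
  have n1 : c₁ ≠ c₂ := by rw [Ne, Fin.ext_iff]; omega
  have n2 : c₀ ≠ c₁ := by rw [Ne, Fin.ext_iff]; omega
  rw [len, e, Finset.card_eq_three]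
  exact ⟨_, _, _, by simp [n1], by simp [n2], by simp [n2], rfl⟩

lemma len_p321 : len p321 = 3 := by decide

lemma Reduction.factorizesOver {N : ℕ} {x : Equiv.Perm (Fin N)} (h : Reduction x) :
    FactorizesOver x p321 := by
  obtain ⟨y, c₀, c₁, c₂, h1, h2, hinv, m1, m2, d1, d2⟩ := h
  have hN := c₂.isLt
  have n1 : c₁ ≠ c₂ := by rw [Ne, Fin.ext_iff]; omega
  have n2 : c₁ ≠ c₀ := by rw [Ne, Fin.ext_iff]; omega
  set s := Equiv.swap c₀ c₂ with hs
  have s0 : s c₀ = c₂ := Equiv.swap_apply_left _ _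
  have s1 : s c₁ = c₁ := Equiv.swap_apply_of_ne_of_ne n2 n1
  have s2 : s c₂ = c₀ := Equiv.swap_apply_right _ _
  have hss : s * s = 1 := Equiv.swap_mul_self _ _
  have hzs : x * y⁻¹ * s * s = x * y⁻¹ := by rw [mul_assoc, hss, mul_one]
  have hx : x * y⁻¹ * s * s * y = x := by rw [hzs]; simp
  have l1 := len_mul_of_inv_subset (x * y⁻¹) y (by simpa using hinv)
  have l2 := len_mul_of_inv_subset (x * y⁻¹ * s) s (by
    rw [hzs]
    intro a b hab hsb
    rcases (swap_inversion_iff h1 h2 a b).1 ⟨hab, hsb⟩ with ⟨rfl, rfl⟩ | ⟨rfl, rfl⟩ | ⟨rfl, rfl⟩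
    · exact d1
    · exact d2.trans d1
    · exact d2)
  rw [hzs, hs, len_swap h1 h2, ← hs] at l2
  rw [inv_mul_cancel_right, l2] at l1
  have w0 : ∀ hh, (⟨c₀.val + 0, hh⟩ : Fin N) = c₀ := fun _ => rfl
  have w1 : ∀ hh, (⟨c₀.val + 1, hh⟩ : Fin N) = c₁ := fun _ => Fin.ext h1.symm
  have w2 : ∀ hh, (⟨c₀.val + 2, hh⟩ : Fin N) = c₂ := fun _ => Fin.ext h2.symm
  refine ⟨c₀.val, by omega, s, y, x * y⁻¹ * s, ?_, ?_, hx.symm, ?_, ?_, ?_⟩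
  · intro t
    fin_cases t
    · simp [s0, p321, h2]
    · simp [w1, s1, p321, h1]
    · simp [w2, s2, p321]
  · intro m hm
    refine Equiv.swap_apply_of_ne_of_ne ?_ ?_ <;> rw [Ne, Fin.ext_iff] <;> omega
  · rw [l1, len_p321, add_assoc]
  · intro a b hab
    fin_cases a <;> fin_cases b <;> simp at hab <;> simp only [w0, w1, w2]
    · exact m1
    · exact m1.trans m2
    · exact m2
  · intro a b hab
    fin_cases a <;> fin_cases b <;> simp at hab <;>
      simp only [w0, w1, w2, Equiv.Perm.mul_apply, s0, s1, s2]
    · exact d2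
    · exact d2.trans d1
    · exact d1

theorem stmt0 (N : ℕ) (hN : 1 ≤ N) (x : Equiv.Perm (Fin N)) :
    Contains x p321 ↔ FactorizesOver x p321 := by
  constructor
  · rintro ⟨f, hf, hx⟩
    exact (reduction_of_occurrence N x (f 0) (f 1) (f 2) (by have := (f 2).isLt; omega)
      (hf (by decide)) (hf (by decide)) ((hx 1 0).2 (by decide))
      ((hx 2 1).2 (by decide))).factorizesOver
  · rintro ⟨j, hj, s, y, z, hs, -, hx, -, hy, hz⟩
    refine ⟨fun a => y⁻¹ ⟨j + a.val, by have := a.isLt; omega⟩, fun a b hab => hy a b hab, ?_⟩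
    -- At the `a`-th position of the occurrence, `x` takes the value of `z` at `j + σ a`.
    have hxa : ∀ a : Fin 3, x (y⁻¹ ⟨j + a.val, by have := a.isLt; omega⟩)
        = z ⟨j + (p321 a).val, by have := (p321 a).isLt; omega⟩ := by
      intro a
      rw [hx]
      rw [Equiv.Perm.mul_apply, Equiv.Perm.mul_apply, ← Equiv.Perm.mul_apply y, mul_inv_cancel,
        Equiv.Perm.one_apply]
      exact congrArg z (Fin.ext (hs a))
    have hmono : StrictMono fun a : Fin 3 => z ⟨j + a.val, by have := a.isLt; omega⟩ :=
      fun a b hab => hz a b hab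
    intro a b
    simp only [hxa]
    exact hmono.lt_iff_lt (a := p321 a) (b := p321 b)
end

section
/- Let N ≥ 1 and let x ∈ S_N. Then x contains the pattern [312] (the permutation σ ∈ S_3 with σ(1)=3, σ(2)=1, σ(3)=2) if and only if x factorizes over [312]. (Note ℓ([312]) = 2; this is the statement that x contains [312] if and only if x has an unmatched descent.) -/
/-- The pattern [312]. -/
def p312 : Equiv.Perm (Fin 3) := ⟨![2, 0, 1], ![1, 2, 0], by decide, by decide⟩

/-- Lengths add along `a * b` when every inversion of `b` is still an inversion of `a * b`: the
remaining inversions of `a * b` correspond under `b` to those of `a`. -/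
theorem len_mul_of_forall {N : ℕ} (a b : Equiv.Perm (Fin N))
    (h : ∀ i i' : Fin N, i < i' → b i' < b i → a (b i') < a (b i)) :
    len (a * b) = len a + len b := by
  classical
  unfold len
  rw [← Finset.card_filter_add_card_filter_not (s := Finset.univ.filter
    fun p : Fin N × Fin N => p.1 < p.2 ∧ (a * b) p.2 < (a * b) p.1) (fun p => b p.1 < b p.2)]
  congr 1
  · refine Finset.card_bij (fun p _ => (b p.1, b p.2)) ?_ ?_ ?_
    · rintro ⟨u, v⟩ hp
      simp only [Finset.mem_filter, Finset.mem_univ, true_and] at hp ⊢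
      exact ⟨hp.2, hp.1.2⟩
    · rintro ⟨u, v⟩ _ ⟨u', v'⟩ _ he
      simpa using he
    · rintro ⟨u, v⟩ hp
      simp only [Finset.mem_filter, Finset.mem_univ, true_and] at hp
      refine ⟨(b.symm u, b.symm v), ?_, by simp⟩
      simp only [Finset.mem_filter, Finset.mem_univ, true_and]
      simp only [Equiv.Perm.mul_apply, Equiv.apply_symm_apply]
      refine ⟨⟨?_, hp.2⟩, hp.1⟩
      by_contra hlt
      rcases (not_lt.mp hlt).lt_or_eq with h1 | h1
      · have := h _ _ h1 (by simpa using hp.1)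
        simp only [Equiv.apply_symm_apply] at this
        exact lt_asymm this hp.2
      · have := b.symm.injective h1
        subst this
        exact lt_irrefl _ hp.1
  · congr 1
    ext ⟨u, v⟩
    simp only [Finset.mem_filter, Finset.mem_univ, true_and]
    simp only [Equiv.Perm.mul_apply]
    constructor
    · rintro ⟨⟨h1, h2⟩, h3⟩
      refine ⟨h1, lt_of_le_of_ne (not_lt.mp h3) fun he => ?_⟩
      exact h1.ne (b.injective he).symm
    · rintro ⟨h1, h2⟩
      exact ⟨⟨h1, h _ _ h1 h2⟩, not_lt.mpr h2.le⟩

/-- An injective key on `Fin N` is sorted by some permutation. -/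
theorem exists_rank {N : ℕ} (k : Fin N → ℕ) (hk : Function.Injective k) :
    ∃ y : Equiv.Perm (Fin N), ∀ u v, y u < y v ↔ k u < k v := by
  have hm : StrictMono (k ∘ Tuple.sort k) :=
    (Tuple.monotone_sort k).strictMono_of_injective (hk.comp (Tuple.sort k).injective)
  refine ⟨(Tuple.sort k).symm, fun u v => ?_⟩
  rw [← hm.lt_iff_lt]
  simp

/-- Two positions with no key strictly between theirs are sorted to consecutive places. -/
theorem succ_of_no_between {N : ℕ} {k : Fin N → ℕ} {y : Equiv.Perm (Fin N)}
    (hy : ∀ u v, y u < y v ↔ k u < k v) {p q : Fin N} (hpq : k p < k q)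
    (h : ∀ u, k p < k u → ¬ k u < k q) : (y q).val = (y p).val + 1 := by
  have h1 : (y p).val < (y q).val := (hy p q).2 hpq
  by_contra hne
  have hb := (y q).isLt
  obtain ⟨u, hu⟩ := y.surjective ⟨(y p).val + 1, by omega⟩
  have hu' : (y u).val = (y p).val + 1 := by rw [hu]
  refine h u ((hy _ _).1 ?_) ((hy _ _).1 ?_) <;> rw [Fin.lt_def] <;> omega

/-- An occurrence `p, q, r` of 312 in which no position lies between `q` and `r` both in place and
in value can be listed consecutively by a permutation whose inversions are all inversions
of `x`. -/
theorem exists_consecutive {N : ℕ} (x : Equiv.Perm (Fin N)) (p q r : Fin N) (hpq : p < q)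
    (hqr : q < r) (h1 : x q < x r) (h2 : x r < x p)
    (hmin : ∀ u, q < u → u < r → x q < x u → ¬ x u < x r) :
    ∃ y : Equiv.Perm (Fin N), (∀ i i', i < i' → y i' < y i → x i' < x i) ∧
      (y q).val = (y p).val + 1 ∧ (y r).val = (y p).val + 2 := by
  classical
  let T : Fin N → Prop := fun u => u = p ∨ u = q ∨ u = r
  let B : Fin N → Prop := fun u => ∃ t, T t ∧ u < t ∧ x u < x t
  -- blocks: the triple is 1, the positions below it are 0, all others are 2
  let bl : Fin N → ℕ := fun u => if T u then 1 else if B u then 0 else 2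
  let k : Fin N → ℕ := fun u => bl u * N + u.val
  have kbl : ∀ u v, bl u < bl v → k u < k v := by
    intro u v h
    have : (bl u + 1) * N ≤ bl v * N := Nat.mul_le_mul_right N h
    have := u.isLt
    simp only [k]
    rw [add_mul] at *
    omega
  have klt : ∀ u v, k u < k v ↔ bl u < bl v ∨ (bl u = bl v ∧ u < v) := by
    intro u v
    rcases lt_trichotomy (bl u) (bl v) with h | h | h
    · simp [kbl u v h, h]
    · simp [k, h]
    · have := kbl v u h
      constructor
      · intro h'; omega
      · rintro (h' | h') <;> omega
  have kinj : Function.Injective k := by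
    intro u v h
    have h3 := klt u v
    have h4 := klt v u
    rw [Fin.lt_def] at h3 h4
    apply Fin.ext
    omega
  have blT : ∀ u, T u → bl u = 1 := fun u h => by simp [bl, h]
  have blT' : ∀ u, bl u = 1 → T u := by
    intro u h
    by_contra hT
    by_cases hB : B u <;> simp [bl, hT, hB] at h
  have bp := blT p (Or.inl rfl)
  have bq := blT q (Or.inr (Or.inl rfl))
  have br := blT r (Or.inr (Or.inr rfl))
  -- convexity of the triple
  have conv : ∀ u v t, T u → T t → u < v → x u < x v → v < t → x v < x t → False := by
    rintro u v t (rfl | rfl | rfl) (rfl | rfl | rfl) a1 a2 a3 a4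
    all_goals first | exact hmin v a1 a3 a2 a4 | (simp only [Fin.lt_def] at *; omega)
  have mono : ∀ u v, u < v → x u < x v → k u < k v := by
    intro u v huv hx
    rw [klt]
    by_cases hTv : T v
    · by_cases hTu : T u
      · exact Or.inr ⟨by rw [blT u hTu, blT v hTv], huv⟩
      · have hBu : B u := ⟨v, hTv, huv, hx⟩
        left
        simp [bl, hTv, hTu, hBu]
    · by_cases hBv : B v
      · obtain ⟨t, ht, h3, h4⟩ := hBv
        have hTu : ¬ T u := fun hTu => conv u v t hTu ht huv hx h3 h4
        have hBu : B u := ⟨t, ht, huv.trans h3, hx.trans h4⟩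
        have hBv : B v := ⟨t, ht, h3, h4⟩
        right
        simp [bl, hTv, hTu, hBu, hBv, huv]
      · have hv : bl v = 2 := by simp [bl, hTv, hBv]
        have hu : bl u ≤ 2 := by simp only [bl]; split_ifs <;> omega
        rcases hu.lt_or_eq with h | h
        · left; omega
        · right; exact ⟨by omega, huv⟩
  obtain ⟨y, hy⟩ := exists_rank k kinj
  have between : ∀ u s t, bl s = 1 → bl t = 1 → k s < k u → k u < k t →
      T u ∧ s < u ∧ u < t := by
    intro u s t hs ht h3 h4
    rw [klt] at h3 h4
    refine ⟨blT' u (by omega), ?_, ?_⟩ <;> omega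
  have e1 : (y q).val = (y p).val + 1 := by
    refine succ_of_no_between hy ((klt _ _).2 (by omega)) fun u h3 h4 => ?_
    obtain ⟨hT | hT | hT, h5, h6⟩ := between u p q bp bq h3 h4 <;> subst hT <;> omega
  have e2 : (y r).val = (y q).val + 1 := by
    refine succ_of_no_between hy ((klt _ _).2 (by omega)) fun u h3 h4 => ?_
    obtain ⟨hT | hT | hT, h5, h6⟩ := between u q r bq br h3 h4 <;> subst hT <;> omega
  refine ⟨y, fun i i' hi hyi => ?_, e1, by omega⟩
  by_contra hx
  have hne : x i ≠ x i' := fun h => hi.ne (x.injective h)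
  have := mono i i' hi (lt_of_le_of_ne (not_lt.mp hx) hne)
  rw [hy] at hyi
  omega

/-- The cycle `a ↦ c, b ↦ a, c ↦ b`, which is the shift of 312 when `a, b, c` are consecutive. -/
def shift312 {N : ℕ} (a b c : Fin N) : Equiv.Perm (Fin N) := Equiv.swap b c * Equiv.swap a b

theorem shift312_apply {N : ℕ} {a b c : Fin N} (hab : b.val = a.val + 1) (hbc : c.val = a.val + 2)
    (m : Fin N) :
    shift312 a b c m = if m = a then c else if m = b then a else if m = c then b else m := by
  simp only [shift312, Equiv.Perm.mul_apply, Equiv.swap_apply_def]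
  split_ifs <;> omega

theorem shift312_inversion {N : ℕ} {a b c : Fin N} (hab : b.val = a.val + 1)
    (hbc : c.val = a.val + 2) (u v : Fin N) :
    (u < v ∧ shift312 a b c v < shift312 a b c u) ↔ u = a ∧ (v = b ∨ v = c) := by
  simp only [shift312_apply hab hbc, Fin.ext_iff, Fin.lt_def]
  split_ifs <;> omega

theorem len_shift312 {N : ℕ} {a b c : Fin N} (hab : b.val = a.val + 1)
    (hbc : c.val = a.val + 2) : len (shift312 a b c) = 2 := by
  classical
  have : (Finset.univ.filter fun p : Fin N × Fin N =>
      p.1 < p.2 ∧ shift312 a b c p.2 < shift312 a b c p.1) = {(a, b), (a, c)} := by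
    ext ⟨u, v⟩
    simp only [Finset.mem_filter, Finset.mem_univ, true_and, shift312_inversion hab hbc,
      Finset.mem_insert, Finset.mem_singleton, Prod.mk.injEq]
    tauto
  unfold len
  rw [this, Finset.card_pair]
  intro h
  have := congrArg (fun p => p.2.val) h
  simp only at this
  omega

theorem len_p312 : len p312 = 2 := by decide

theorem factorizesOver_of_contains {N : ℕ} (x : Equiv.Perm (Fin N)) (h : Contains x p312) :
    FactorizesOver x p312 := by
  classical
  obtain ⟨f, hf, hx⟩ := h
  have hpq : f 0 < f 1 := hf (by decide)
  -- the smallest admissible third position makes `q ≺ r` a covering relation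
  obtain ⟨r, ⟨hqr, h1, h2⟩, hmin⟩ : ∃ r, (f 1 < r ∧ x (f 1) < x r ∧ x r < x (f 0)) ∧
      ∀ u, u < r → ¬ (f 1 < u ∧ x (f 1) < x u ∧ x u < x (f 0)) := by
    obtain ⟨r, hr, hm⟩ := WellFounded.has_min (wellFounded_lt (α := Fin N))
      {r | f 1 < r ∧ x (f 1) < x r ∧ x r < x (f 0)}
      ⟨f 2, hf (by decide), (hx 1 2).2 (by decide), (hx 2 0).2 (by decide)⟩
    exact ⟨r, hr, fun u hu hu' => hm u hu' hu⟩
  generalize f 0 = p at *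
  generalize f 1 = q at *
  obtain ⟨y, hy, e1, e2⟩ := exists_consecutive x p q r hpq hqr h1 h2
    fun u a1 a2 a3 a4 => hmin u a2 ⟨a1, a3, a4.trans h2⟩
  have inv := shift312_inversion (a := y p) e1 e2
  have app := shift312_apply (a := y p) e1 e2
  have hlen := len_shift312 (a := y p) e1 e2
  generalize hs : shift312 (y p) (y q) (y r) = s at inv app hlen
  have sp : s (y p) = y r := by simp [app]
  have sq : s (y q) = y p := by simp [app, hpq.ne']
  have sr : s (y r) = y q := by simp [app, hqr.ne', (hpq.trans hqr).ne']
  have hj : (y p).val + 3 ≤ N := by have := (y r).isLt; omega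
  have w0 : ∀ h, (⟨(y p).val + 0, h⟩ : Fin N) = y p := fun h => Fin.ext rfl
  have w1 : ∀ h, (⟨(y p).val + 1, h⟩ : Fin N) = y q := fun h => Fin.ext e1.symm
  have w2 : ∀ h, (⟨(y p).val + 2, h⟩ : Fin N) = y r := fun h => Fin.ext e2.symm
  have hz : x = x * (s * y)⁻¹ * s * y := by group
  have yi : ∀ u, y⁻¹ (y u) = u := fun u => y.symm_apply_apply u
  have z0 : (x * (s * y)⁻¹) (y p) = x q := by
    rw [← sq, ← Equiv.Perm.mul_apply, ← Equiv.Perm.mul_apply, ← hz]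
  have z1 : (x * (s * y)⁻¹) (y q) = x r := by
    rw [← sr, ← Equiv.Perm.mul_apply, ← Equiv.Perm.mul_apply, ← hz]
  have z2 : (x * (s * y)⁻¹) (y r) = x p := by
    rw [← sp, ← Equiv.Perm.mul_apply, ← Equiv.Perm.mul_apply, ← hz]
  have hsy : len (s * y) = len s + len y := by
    refine len_mul_of_forall s y fun i i' hi hyi => ?_
    by_contra hns
    have hne : s (y i) ≠ s (y i') := fun h => hi.ne (y.injective (s.injective h))
    -- an inversion of `s` sits at `p, q` or `p, r`, which `y` lists in increasing order
    obtain ⟨h3, h4⟩ := (inv (y i') (y i)).1 ⟨hyi, lt_of_le_of_ne (not_lt.mp hns) hne⟩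
    simp only [EmbeddingLike.apply_eq_iff_eq] at h3 h4
    rcases h4 with h4 | h4 <;> subst h3 h4
    · exact lt_asymm hi hpq
    · exact lt_asymm hi (hpq.trans hqr)
  have hxl : len x = len (x * (s * y)⁻¹) + len (s * y) := by
    conv_lhs => rw [show x = x * (s * y)⁻¹ * (s * y) by group]
    refine len_mul_of_forall _ _ fun i i' hi hsi => ?_
    simp only [← Equiv.Perm.mul_apply, inv_mul_cancel_right]
    by_cases hyi : y i' < y i
    · exact hy i i' hi hyi
    · have hne : y i ≠ y i' := fun h => hi.ne (y.injective h)
      obtain ⟨h3, h4⟩ := (inv (y i) (y i')).1 ⟨lt_of_le_of_ne (not_lt.mp hyi) hne, hsi⟩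
      simp only [EmbeddingLike.apply_eq_iff_eq] at h3 h4
      rcases h4 with h4 | h4 <;> subst h3 h4
      · exact h1.trans h2
      · exact h2
  refine ⟨(y p).val, hj, s, y, x * (s * y)⁻¹, ?_, ?_, hz, ?_, ?_, ?_⟩
  · intro t
    fin_cases t
    · simp only [w0, sp, e2]; rfl
    · simp only [w1, sq]; rfl
    · simp only [w2, sr, e1]; rfl
  · intro m hm
    rw [app, if_neg, if_neg, if_neg] <;> rintro rfl <;> omega
  · rw [hxl, hsy, hlen, len_p312]
    omega
  · intro a b hab
    fin_cases a <;> fin_cases b <;> first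
      | exact absurd hab (by decide)
      | (simp only [w0, w1, w2, yi]; first | exact hpq | exact hqr | exact hpq.trans hqr)
  · intro a b hab
    fin_cases a <;> fin_cases b <;> first
      | exact absurd hab (by decide)
      | (simp only [w0, w1, w2, z0, z1, z2]; first | exact h1 | exact h2 | exact h1.trans h2)

theorem contains_of_factorizesOver {N : ℕ} (x : Equiv.Perm (Fin N)) (h : FactorizesOver x p312) :
    Contains x p312 := by
  obtain ⟨j, hj, s, y, z, hs, -, rfl, -, hy, hz⟩ := h
  refine ⟨fun a => y⁻¹ ⟨j + a.val, by have := a.isLt; omega⟩, fun a b hab => hy a b hab, ?_⟩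
  have hzm : StrictMono fun a : Fin 3 => z ⟨j + a.val, by have := a.isLt; omega⟩ :=
    fun a b hab => hz a b hab
  have hs' : ∀ t : Fin 3, s ⟨j + t.val, by have := t.isLt; omega⟩ =
      ⟨j + (p312 t).val, by have := (p312 t).isLt; omega⟩ := fun t => Fin.ext (hs t)
  have hyy : ∀ m, y (y⁻¹ m) = m := fun m => y.apply_symm_apply m
  intro a b
  simp only [Equiv.Perm.mul_apply, hyy, hs']
  exact hzm.lt_iff_lt (a := p312 a) (b := p312 b)

theorem stmt2 (N : ℕ) (hN : 1 ≤ N) (x : Equiv.Perm (Fin N)) :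
    Contains x p312 ↔ FactorizesOver x p312 :=
  ⟨factorizesOver_of_contains x, contains_of_factorizesOver x⟩
end

section
/- Let K ≥ 2 and let σ ∈ S_K be a permutation pattern whose length is at most one less than the length of the longest element of S_K, i.e. ℓ(σ) ≥ K(K−1)/2 − 1. Then for every N ≥ 1 and every x ∈ S_N, x contains σ if and only if x factorizes over σ. -/
/-! ### Additivity of the length -/

lemma perm_apply_inv {α : Type*} (g : Equiv.Perm α) (u : α) : g (g⁻¹ u) = u :=
  g.apply_symm_apply u

lemma perm_inv_apply {α : Type*} (g : Equiv.Perm α) (u : α) : g⁻¹ (g u) = u :=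
  g.symm_apply_apply u

/-- Length is additive on `a * b` when every inversion of `b` is an inversion of `a * b`: the
remaining inversions of `a * b` are carried by `b` bijectively onto those of `a`. -/
lemma len_mul {N : ℕ} (a b : Equiv.Perm (Fin N))
    (h : ∀ p q : Fin N, p < q → b q < b p → a (b q) < a (b p)) :
    len (a * b) = len b + len a := by
  classical
  have h1 : len a = (Finset.univ.filter fun p : Fin N × Fin N =>
      p.1 < p.2 ∧ b p.1 < b p.2 ∧ a (b p.2) < a (b p.1)).card := by
    symm
    unfold len
    refine Finset.card_bij (fun p _ => (b p.1, b p.2)) ?_ ?_ ?_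
    · simp +contextual
    · rintro ⟨p, q⟩ _ ⟨p', q'⟩ _ he
      simpa using he
    · rintro ⟨u, v⟩ huv
      simp only [Finset.mem_filter, Finset.mem_univ, true_and] at huv
      refine ⟨(b⁻¹ u, b⁻¹ v), ?_, by simp⟩
      simp only [Finset.mem_filter, Finset.mem_univ, true_and, perm_apply_inv]
      refine ⟨?_, huv⟩
      by_contra hlt
      have hne : b⁻¹ v ≠ b⁻¹ u := fun e => huv.1.ne' (b⁻¹.injective e)
      have := h _ _ (lt_of_le_of_ne (not_lt.1 hlt) hne) (by simpa using huv.1)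
      simp only [perm_apply_inv] at this
      exact absurd this huv.2.asymm
  rw [h1]
  unfold len
  rw [← Finset.card_union_of_disjoint]
  · refine congrArg Finset.card ?_
    ext ⟨p, q⟩
    simp only [Finset.mem_filter, Finset.mem_univ, true_and, Finset.mem_union]
    simp only [Equiv.Perm.mul_apply]
    constructor
    · rintro ⟨hpq, hx⟩
      rcases lt_trichotomy (b p) (b q) with hb | hb | hb
      · exact Or.inr ⟨hpq, hb, hx⟩
      · exact absurd (b.injective hb) hpq.ne
      · exact Or.inl ⟨hpq, hb⟩
    · rintro (⟨hpq, hb⟩ | ⟨hpq, _, hx⟩)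
      · exact ⟨hpq, h _ _ hpq hb⟩
      · exact ⟨hpq, hx⟩
  · rw [Finset.disjoint_left]
    rintro ⟨p, q⟩ h1 h2
    simp only [Finset.mem_filter, Finset.mem_univ, true_and] at h1 h2
    exact absurd h1.2 h2.2.1.asymm

/-! ### Non-inversions of the pattern and convex occurrences -/

lemma card_lt_pairs (K : ℕ) :
    (Finset.univ.filter fun p : Fin K × Fin K => p.1 < p.2).card = K * (K - 1) / 2 := by
  rw [Finset.card_filter, Fintype.sum_prod_type_right, ← Finset.sum_range_id_mul_two,
    Nat.mul_div_cancel _ two_pos, Finset.sum_range]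
  refine Finset.sum_congr rfl fun b _ => ?_
  rw [← Finset.card_filter]
  simp [Finset.filter_gt_eq_Iio]

lemma noninv_unique {K : ℕ} (σ : Equiv.Perm (Fin K)) (hσ : K * (K - 1) / 2 - 1 ≤ len σ)
    {a b a' b' : Fin K} (h : a < b) (hs : σ a < σ b) (h' : a' < b') (hs' : σ a' < σ b') :
    a = a' ∧ b = b' := by
  have key := Finset.card_filter_add_card_filter_not
    (s := Finset.univ.filter fun p : Fin K × Fin K => p.1 < p.2) (fun p => σ p.2 < σ p.1)
  rw [card_lt_pairs, Finset.filter_filter, Finset.filter_filter] at key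
  unfold len at hσ
  have hle : (Finset.univ.filter fun p : Fin K × Fin K => p.1 < p.2 ∧ ¬ σ p.2 < σ p.1).card ≤ 1 := by
    omega
  have := Finset.card_le_one.1 hle (a, b) (by simp [h, hs.le]) (a', b') (by simp [h', hs'.le])
  simpa using this

/-- An occurrence of `σ` can be chosen so that no point of the graph of `x` lies strictly between
two of its points, in both position and value. -/
lemma exists_convex {K N : ℕ} (σ : Equiv.Perm (Fin K)) (hσ : K * (K - 1) / 2 - 1 ≤ len σ)
    (x : Equiv.Perm (Fin N)) (hc : Contains x σ) :
    ∃ f : Fin K → Fin N, StrictMono f ∧ (∀ a b : Fin K, x (f a) < x (f b) ↔ σ a < σ b) ∧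
      ∀ a b r, f a < r → r < f b → x (f a) < x r → x r < x (f b) → False := by
  classical
  by_cases hex : ∃ a b : Fin K, a < b ∧ σ a < σ b
  swap
  · obtain ⟨f, hf, hp⟩ := hc
    exact ⟨f, hf, hp, fun a b r h1 h2 h3 h4 =>
      hex ⟨a, b, hf.lt_iff_lt.1 (h1.trans h2), (hp a b).1 (h3.trans h4)⟩⟩
  obtain ⟨a, b, hab, hsab⟩ := hex
  let S : Set (Fin K → Fin N) := {f | StrictMono f ∧ ∀ a b : Fin K, x (f a) < x (f b) ↔ σ a < σ b}
  obtain ⟨f, ⟨hf, hp⟩, hmin⟩ := Set.exists_min_image S (fun f => f b) S.toFinite hc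
  refine ⟨f, hf, hp, fun a' b' r h1 h2 h3 h4 => ?_⟩
  obtain ⟨rfl, rfl⟩ := noninv_unique σ hσ hab hsab (hf.lt_iff_lt.1 (h1.trans h2))
    ((hp a' b').1 (h3.trans h4))
  -- By uniqueness of the non-inversion, no other entry lies between `a` and `b` in position
  -- or in value.
  have hpos : ∀ c, c < b → c ≤ a := by
    intro c hcb
    by_contra hac
    rw [not_le] at hac
    rcases lt_or_gt_of_ne (fun e => hac.ne (σ.injective e) : σ a ≠ σ c) with h | h
    · exact hcb.ne (noninv_unique σ hσ hac h hab hsab).2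
    · exact hac.ne' (noninv_unique σ hσ hcb (h.trans hsab) hab hsab).1
  have hval : ∀ c, σ c < σ b → σ c ≤ σ a := by
    intro c hcb
    by_contra hac
    rw [not_le] at hac
    have hca : c ≠ a := by rintro rfl; exact lt_irrefl _ hac
    have hcb' : c ≠ b := by rintro rfl; exact lt_irrefl _ hcb
    rcases lt_or_gt_of_ne hca with h | h
    · exact hca (noninv_unique σ hσ (h.trans hab) hcb hab hsab).1
    · exact hcb' (noninv_unique σ hσ h hac hab hsab).2
  have hlt : ∀ c, c ≠ b → (x (f c) < x r ↔ σ c < σ b) := by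
    intro c hcb
    constructor
    · intro h
      exact (hp c b).1 (h.trans h4)
    · intro h
      refine lt_of_le_of_lt ?_ h3
      rw [← not_lt, hp, not_lt]
      exact hval c h
  have hgt : ∀ c, c ≠ b → (x r < x (f c) ↔ σ b < σ c) := by
    intro c hcb
    have hne : σ c ≠ σ b := fun e => hcb (σ.injective e)
    constructor
    · intro h
      by_contra h'
      exact absurd ((hlt c hcb).2 (lt_of_le_of_ne (not_lt.1 h') hne)) h.asymm
    · intro h
      exact h4.trans ((hp b c).2 h)
  have hmem : Function.update f b r ∈ S := by
    constructor
    · intro c d hcd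
      by_cases hd : d = b
      · subst hd
        rw [Function.update_self, Function.update_of_ne hcd.ne]
        exact lt_of_le_of_lt (hf.monotone (hpos c hcd)) h1
      · rw [Function.update_of_ne hd]
        by_cases hcb : c = b
        · subst hcb
          rw [Function.update_self]
          exact h2.trans (hf hcd)
        · rw [Function.update_of_ne hcb]
          exact hf hcd
    · intro c d
      by_cases hd : d = b
      · by_cases hcb : c = b
        · simp [hd, hcb]
        · rw [hd, Function.update_self, Function.update_of_ne hcb]
          exact hlt c hcb
      · rw [Function.update_of_ne hd]
        by_cases hcb : c = b
        · rw [hcb, Function.update_self]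
          exact hgt d hd
        · rw [Function.update_of_ne hcb]
          exact hp c d
  have := hmin _ hmem
  simp only [Function.update_self] at this
  exact absurd h2 (not_lt.2 this)

/-! ### Shifts of a pattern -/

/-- The shift of a permutation by `j` has the same length, its inversions being those of the
window. The last conclusion locates the inversions of the shift. -/
lemma exists_shift {K N : ℕ} (σ : Equiv.Perm (Fin K)) (j : ℕ) (hj : j + K ≤ N) :
    ∃ σ' : Equiv.Perm (Fin N),
      (∀ t : Fin K, σ' ⟨j + t.val, by have := t.isLt; omega⟩ =
        ⟨j + (σ t).val, by have := (σ t).isLt; omega⟩) ∧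
      (∀ m : Fin N, (m.val < j ∨ j + K ≤ m.val) → σ' m = m) ∧
      len σ' = len σ ∧
      ∀ p q : Fin N, p < q → σ' q < σ' p → ∃ s t : Fin K, p.val = j + s ∧ q.val = j + t := by
  let e : Fin K ↪ Fin N := ⟨fun t => ⟨j + t.val, by have := t.isLt; omega⟩, by
    intro s t h
    simpa [Fin.ext_iff] using h⟩
  have heval : ∀ t, (e t).val = j + t.val := fun t => rfl
  have hA : ∀ t, σ.viaFintypeEmbedding e (e t) = e (σ t) :=
    fun t => Equiv.Perm.viaFintypeEmbedding_apply_image σ e t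
  have hB : ∀ m : Fin N, (m.val < j ∨ j + K ≤ m.val) → σ.viaFintypeEmbedding e m = m := by
    intro m hm
    apply Equiv.Perm.viaFintypeEmbedding_apply_notMem_range
    rintro ⟨t, rfl⟩
    have := t.isLt
    rw [heval] at hm
    omega
  have hin : ∀ m : Fin N, (m.val < j ∨ j + K ≤ m.val) ∨ ∃ t, m = e t := by
    intro m
    by_cases h : m.val < j ∨ j + K ≤ m.val
    · exact Or.inl h
    · refine Or.inr ⟨⟨m.val - j, by omega⟩, ?_⟩
      ext
      rw [heval]
      simp only
      omega
  have hC : ∀ p q : Fin N, p < q → σ.viaFintypeEmbedding e q < σ.viaFintypeEmbedding e p →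
      ∃ s t : Fin K, p = e s ∧ q = e t := by
    intro p q hpq hs
    rcases hin p with h1 | ⟨s, rfl⟩ <;> rcases hin q with h2 | ⟨t, rfl⟩
    · rw [hB _ h1, hB _ h2] at hs
      exact absurd hpq hs.asymm
    · rw [hB _ h1, hA] at hs
      rw [Fin.lt_def, heval] at hs hpq
      have := t.isLt; have := (σ t).isLt
      omega
    · rw [hB _ h2, hA] at hs
      rw [Fin.lt_def, heval] at hs hpq
      have := s.isLt; have := (σ s).isLt
      omega
    · exact ⟨s, t, rfl, rfl⟩
  have helt : ∀ s t, e s < e t ↔ s < t := by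
    intro s t
    rw [Fin.lt_def, heval, heval, Fin.lt_def]
    omega
  refine ⟨σ.viaFintypeEmbedding e, hA, hB, ?_, ?_⟩
  · symm
    unfold len
    refine Finset.card_bij (fun p _ => (e p.1, e p.2)) ?_ ?_ ?_
    · rintro ⟨s, t⟩ h
      simpa only [Finset.mem_filter, Finset.mem_univ, true_and, hA, helt] using h
    · rintro ⟨p, q⟩ _ ⟨p', q'⟩ _ he
      simpa using he
    · rintro ⟨p, q⟩ h
      simp only [Finset.mem_filter, Finset.mem_univ, true_and] at h
      obtain ⟨s, t, rfl, rfl⟩ := hC p q h.1 h.2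
      simp only [hA, helt] at h
      exact ⟨(s, t), by simpa using h, rfl⟩
  · intro p q h1 h2
    obtain ⟨s, t, rfl, rfl⟩ := hC p q h1 h2
    exact ⟨s, t, rfl, rfl⟩

/-! ### Making an occurrence consecutive -/

/-- A convex occurrence fills a window of a linear extension: `y` moves the occurrence `f` onto the
consecutive positions `j, …, j + K - 1`, and inverts only pairs that are inverted by `x`. -/
lemma exists_gather {K N : ℕ} (x : Equiv.Perm (Fin N)) (f : Fin K → Fin N) (hf : StrictMono f)
    (hconv : ∀ a b r, f a < r → r < f b → x (f a) < x r → x r < x (f b) → False) :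
    ∃ (j : ℕ) (y : Equiv.Perm (Fin N)), (∀ t, (y (f t)).val = j + t.val) ∧
      ∀ p q, p < q → y q < y p → x q < x p := by
  classical
  let c : Fin N → ℕ := fun r =>
    if r ∈ Set.range f then 1 else if ∃ b, r < f b ∧ x r < x (f b) then 0 else 2
  have hc1 : ∀ t, c (f t) = 1 := fun t => if_pos ⟨t, rfl⟩
  have hcle : ∀ r, c r ≤ 2 := by
    intro r
    simp only [c]
    split_ifs <;> omega
  have hc0 : ∀ r, c r < 1 → ∃ b, r < f b ∧ x r < x (f b) := by
    intro r h
    simp only [c] at h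
    split_ifs at h with h1 h2
    · omega
    · exact h2
    · omega
  have hcr : ∀ r, c r = 1 → r ∈ Set.range f := by
    intro r h
    simp only [c] at h
    split_ifs at h with h1 h2
    · exact h1
    · omega
  have hbelow : ∀ r b, r < f b → x r < x (f b) → c r ≤ 1 := by
    intro r b h h'
    simp only [c]
    split_ifs with h1 h2
    · rfl
    · omega
    · exact absurd ⟨b, h, h'⟩ h2
  have hext : ∀ p q, p < q → x p < x q → c p ≤ c q := by
    intro p q hpq hx
    by_contra hlt
    rw [not_le] at hlt
    have h2 := hcle p
    rcases Nat.lt_or_ge (c q) 1 with hq | hq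
    · obtain ⟨b, hb, hb'⟩ := hc0 q hq
      have hp1 : c p = 1 := le_antisymm (hbelow p b (hpq.trans hb) (hx.trans hb')) (by omega)
      obtain ⟨a, rfl⟩ := hcr p hp1
      exact hconv a b q hpq hb hx hb'
    · obtain ⟨b, rfl⟩ := hcr q (by omega)
      have := hbelow p b hpq hx
      omega
  -- `Tuple.sort` is a stable sort, so `y` keeps the original order within each of the blocks.
  obtain ⟨hmono, hstab⟩ := Tuple.eq_sort_iff.1 (rfl : Tuple.sort c = Tuple.sort c)
  set y : Equiv.Perm (Fin N) := (Tuple.sort c)⁻¹ with hy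
  have hyc : ∀ p q, y p < y q → c p < c q ∨ (c p = c q ∧ p < q) := by
    intro p q h
    have h1 := hmono h.le
    have h2 := hstab _ _ h
    simp only [hy, Function.comp, perm_apply_inv] at h1 h2
    rcases h1.lt_or_eq with h3 | h3
    · exact Or.inl h3
    · exact Or.inr ⟨h3, h2 h3⟩
  have hyiff : ∀ p q, y p < y q ↔ c p < c q ∨ (c p = c q ∧ p < q) := by
    intro p q
    refine ⟨hyc p q, fun h => ?_⟩
    by_contra h'
    have hne : q ≠ p := by
      rintro rfl
      rcases h with h | h
      · exact lt_irrefl _ h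
      · exact lt_irrefl _ h.2
    have h2 := hyc q p (lt_of_le_of_ne (not_lt.1 h') fun e => hne (y.injective e))
    rcases h with h | h <;> rcases h2 with h2 | h2
    · omega
    · omega
    · omega
    · exact absurd h.2 h2.2.asymm
  refine ⟨(Finset.univ.filter fun r => c r < 1).card, y, fun t => ?_, fun p q hpq hyq => ?_⟩
  · -- Count the positions sent by `y` to the left of `y (f t)`.
    have h1 : (Finset.univ.filter fun r => y r < y (f t)).card = (y (f t)).val := by
      rw [← Fin.card_Iio (y (f t))]
      refine Finset.card_bij (fun r _ => y r) ?_ ?_ ?_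
      · simp
      · intro _ _ _ _ h
        exact y.injective h
      · intro v hv
        exact ⟨y⁻¹ v, by simpa using hv, by simp⟩
    have h2 : (Finset.univ.filter fun r => y r < y (f t)) =
        (Finset.univ.filter fun r => c r < 1) ∪ (Finset.Iio t).image f := by
      ext r
      simp only [Finset.mem_filter, Finset.mem_univ, true_and, Finset.mem_union,
        Finset.mem_image, Finset.mem_Iio, hyiff, hc1]
      constructor
      · rintro (h | ⟨h, h'⟩)
        · exact Or.inl h
        · obtain ⟨s, rfl⟩ := hcr r h
          exact Or.inr ⟨s, hf.lt_iff_lt.1 h', rfl⟩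
      · rintro (h | ⟨s, hs, rfl⟩)
        · exact Or.inl h
        · exact Or.inr ⟨hc1 s, hf hs⟩
    rw [← h1, h2, Finset.card_union_of_disjoint, Finset.card_image_of_injective _ hf.injective,
      Fin.card_Iio]
    rw [Finset.disjoint_left]
    intro r h h'
    simp only [Finset.mem_filter, Finset.mem_univ, true_and, Finset.mem_image] at h h'
    obtain ⟨s, _, rfl⟩ := h'
    rw [hc1] at h
    exact lt_irrefl _ h
  · by_contra hx
    have hne : x p ≠ x q := fun e => hpq.ne (x.injective e)
    have h1 := hext p q hpq (lt_of_le_of_ne (not_lt.1 hx) hne)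
    rcases hyc q p hyq with h2 | h2
    · omega
    · exact absurd hpq h2.2.asymm

/-! ### Containment and factorization -/

theorem stmt4 (K : ℕ) (hK : 2 ≤ K) (σ : Equiv.Perm (Fin K))
    (hσ : K * (K - 1) / 2 - 1 ≤ len σ)
    (N : ℕ) (hN : 1 ≤ N) (x : Equiv.Perm (Fin N)) :
    Contains x σ ↔ FactorizesOver x σ := by
  constructor
  · intro hc
    obtain ⟨f, hf, hp, hconv⟩ := exists_convex σ hσ x hc
    obtain ⟨j, y, hyf, hyx⟩ := exists_gather x f hf hconv
    have hj : j + K ≤ N := by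
      have h1 := hyf ⟨K - 1, by omega⟩
      have h2 := (y (f ⟨K - 1, by omega⟩)).isLt
      simp only at h1
      omega
    have hwin : ∀ t : Fin K, j + t.val < N := fun t => by omega
    obtain ⟨σ', hs, hfix, hlen, hinv⟩ := exists_shift (N := N) σ j hj
    have hyi : ∀ t : Fin K, y⁻¹ ⟨j + t.val, by have := t.isLt; omega⟩ = f t := by
      intro t
      rw [Equiv.Perm.inv_eq_iff_eq]
      exact Fin.ext (hyf t).symm
    have hsi : ∀ t : Fin K, σ'⁻¹ ⟨j + t.val, by have := t.isLt; omega⟩ =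
        ⟨j + (σ⁻¹ t).val, by have := (σ⁻¹ t).isLt; omega⟩ := by
      intro t
      rw [Equiv.Perm.inv_eq_iff_eq, hs]
      simp
    have hw : x * y⁻¹ = (x * y⁻¹ * σ'⁻¹) * σ' := by group
    have hx : x = (x * y⁻¹) * y := by group
    refine ⟨j, hj, σ', y, x * y⁻¹ * σ'⁻¹, fun t => by rw [hs], hfix, by group, ?_, ?_, ?_⟩
    · have e1 : len x = len y + len (x * y⁻¹) := by
        conv_lhs => rw [hx]
        apply len_mul
        intro p q h1 h2
        simpa using hyx p q h1 h2
      have e2 : len (x * y⁻¹) = len σ' + len (x * y⁻¹ * σ'⁻¹) := by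
        conv_lhs => rw [hw]
        apply len_mul
        intro p q h1 h2
        obtain ⟨s, t, hps, hqt⟩ := hinv p q h1 h2
        obtain rfl : p = ⟨j + s.val, hwin s⟩ := Fin.ext hps
        obtain rfl : q = ⟨j + t.val, hwin t⟩ := Fin.ext hqt
        simp only [Equiv.Perm.mul_apply, perm_inv_apply, hyi, hp]
        rw [hs, hs] at h2
        simpa using h2
      rw [e1, e2, hlen, add_assoc]
    · intro a b hab
      rw [hyi, hyi]
      exact hf hab
    · intro a b hab
      simp only [Equiv.Perm.mul_apply, hsi, hyi, hp, perm_apply_inv]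
      exact hab
  · rintro ⟨j, hj, σ', y, z, hs, -, rfl, -, hy, hz⟩
    refine ⟨fun t => y⁻¹ ⟨j + t.val, by have := t.isLt; omega⟩, fun a b h => hy a b h, ?_⟩
    have hzm : StrictMono fun t : Fin K => z ⟨j + t.val, by have := t.isLt; omega⟩ :=
      fun a b h => hz a b h
    have hs' : ∀ t : Fin K, σ' ⟨j + t.val, by have := t.isLt; omega⟩ =
        ⟨j + (σ t).val, by have := (σ t).isLt; omega⟩ := fun t => Fin.ext (hs t)
    intro a b
    simp only [Equiv.Perm.mul_apply, perm_apply_inv, hs']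
    exact hzm.lt_iff_lt (a := σ a) (b := σ b)
end

section
/- Let N ≥ 2, let x ∈ S_N, and let 1 ≤ i ≤ N−1. Let s_i ∈ S_N be the adjacent transposition exchanging i and i+1, and let f_i : {1,…,N} → {1,…,N} be defined by f_i(i+1) = i and f_i(m) = m for m ≠ i+1. If x(i) < x(i+1), then Q(x ∘ s_i) = Q(x) ∘ f_i; if x(i) > x(i+1), then Q(x) ∘ f_i = Q(x). (This expresses that Q realizes the quotient of the 0-Hecke monoid H_0(S_N) onto the monoid NDPF_N of non-decreasing parking functions.) -/
/-!
`Qmap x m` is characterised by its lower bounds: `a ≤ Qmap x m` iff `a ≤ x j` for all `j ≥ m`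
(`le_Qmap_iff`). Both identities thus compare sets of lower bounds, pointwise in `m`.

Precomposing `x` with the transposition of `p = i` and `q = i + 1` permutes the values on every
tail `{j | m ≤ j}` except the one starting at `q`; there it replaces `x q` by `x p`, so the minimum
over that tail becomes the minimum over the tail starting at `p`, because `x p < x q` makes the
missing value `x q` irrelevant. If instead `x q < x p`, the value `x p` is irrelevant to the tail
of `x` starting at `p`, which therefore has the same minimum as the tail starting at `q`.
-/

/-- `Q(x)(i) = min { x(j) : i ≤ j }`. -/
def Qmap {N : ℕ} (x : Equiv.Perm (Fin N)) : Fin N → Fin N := fun i =>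
  ((Finset.univ.filter fun j => i ≤ j).image x).min'
    ⟨x i, Finset.mem_image_of_mem x (by simp)⟩

theorem le_Qmap_iff {N : ℕ} (x : Equiv.Perm (Fin N)) (m a : Fin N) :
    a ≤ Qmap x m ↔ ∀ j, m ≤ j → a ≤ x j := by
  refine (Finset.le_min'_iff _ _).trans ?_
  simp

theorem stmt6 (N : ℕ) (hN : 2 ≤ N) (x : Equiv.Perm (Fin N)) (i : ℕ) (hi : i + 1 < N) :
    (x ⟨i, by omega⟩ < x ⟨i + 1, hi⟩ →
      Qmap (x * Equiv.swap ⟨i, by omega⟩ ⟨i + 1, hi⟩) =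
        Qmap x ∘ (fun m : Fin N => if m.val = i + 1 then ⟨i, by omega⟩ else m)) ∧
    (x ⟨i + 1, hi⟩ < x ⟨i, by omega⟩ →
      Qmap x ∘ (fun m : Fin N => if m.val = i + 1 then ⟨i, by omega⟩ else m) = Qmap x) := by
  have hi' : i < N := by omega
  obtain ⟨p, hp⟩ : ∃ p : Fin N, p = ⟨i, hi'⟩ := ⟨_, rfl⟩
  obtain ⟨q, hq⟩ : ∃ q : Fin N, q = ⟨i + 1, hi⟩ := ⟨_, rfl⟩
  have hpv : p.val = i := by rw [hp]
  have hqv : q.val = i + 1 := by rw [hq]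
  rw [← hp, ← hq]
  constructor
  · intro hlt
    funext m
    refine eq_of_forall_le_iff fun a => ?_
    simp only [Function.comp_apply, le_Qmap_iff, Equiv.Perm.mul_apply]
    obtain ⟨f, hf⟩ : ∃ f : Fin N, f = if m.val = i + 1 then p else m := ⟨_, rfl⟩
    rw [← hf]
    have hfv : f.val = if m.val = i + 1 then i else m.val := by
      rw [hf]; split_ifs <;> simp [hpv]
    constructor
    · intro h j hj
      rw [Fin.le_def] at hj
      by_cases hjpq : j = p ∨ j = q
      · have hjv : j.val = i ∨ j.val = i + 1 := by
          rcases hjpq with rfl | rfl <;> simp [hpv, hqv]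
        have hap : a ≤ x p := by
          have := h q (by rw [Fin.le_def]; split_ifs at hfv <;> omega)
          rwa [Equiv.swap_apply_right] at this
        rcases hjpq with rfl | rfl
        · exact hap
        · exact hap.trans hlt.le
      · rw [not_or] at hjpq
        have hjv : j.val ≠ i := fun e => hjpq.1 (Fin.ext (e.trans hpv.symm))
        have := h j (by rw [Fin.le_def]; split_ifs at hfv <;> omega)
        rwa [Equiv.swap_apply_of_ne_of_ne hjpq.1 hjpq.2] at this
    · intro h j hj
      rw [Fin.le_def] at hj
      apply h
      rw [Fin.le_def]
      by_cases h1 : j = p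
      · subst h1
        rw [Equiv.swap_apply_left]
        split_ifs at hfv <;> omega
      · by_cases h2 : j = q
        · subst h2
          rw [Equiv.swap_apply_right]
          split_ifs at hfv <;> omega
        · rw [Equiv.swap_apply_of_ne_of_ne h1 h2]
          split_ifs at hfv <;> omega
  · intro hlt
    funext m
    simp only [Function.comp_apply]
    split_ifs with hm
    · obtain rfl : m = q := Fin.ext (hm.trans hqv.symm)
      refine eq_of_forall_le_iff fun a => ?_
      simp only [le_Qmap_iff, Fin.le_def (n := N) (a := p), Fin.le_def (n := N) (a := m)]
      constructor
      · intro h j hj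
        exact h j (by omega)
      · intro h j hj
        by_cases hjp : j = p
        · rw [hjp]
          exact (h m le_rfl).trans hlt.le
        · have : j.val ≠ i := fun e => hjp (Fin.ext (e.trans hpv.symm))
          exact h j (by omega)
    · rfl
end

section
/- Let N ≥ 1 and x ∈ S_N. Then there is exactly one permutation y ∈ S_N that avoids the pattern [321] and satisfies Q(y) = Q(x); moreover this y has minimal length in its fiber, i.e. ℓ(y) ≤ ℓ(x') for every x' ∈ S_N with Q(x') = Q(x). -/
theorem Qmap_le {N : ℕ} (x : Equiv.Perm (Fin N)) {i j : Fin N} (h : i ≤ j) :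
    Qmap x i ≤ x j :=
  Finset.min'_le _ _ (Finset.mem_image_of_mem x (by simpa using h))

theorem exists_Qmap {N : ℕ} (x : Equiv.Perm (Fin N)) (i : Fin N) :
    ∃ j, i ≤ j ∧ x j = Qmap x i := by
  have h := Finset.min'_mem ((Finset.univ.filter fun j => i ≤ j).image x)
    ⟨x i, Finset.mem_image_of_mem x (by simp)⟩
  simpa [Qmap] using h

theorem Qmap_eq {N : ℕ} (x : Equiv.Perm (Fin N)) {i j : Fin N} {v : Fin N} (hij : i ≤ j)
    (hj : x j = v) (hv : ∀ k, i ≤ k → v ≤ x k) : Qmap x i = v := by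
  obtain ⟨k, hk, hk'⟩ := exists_Qmap x i
  exact le_antisymm (hj ▸ Qmap_le x hij) (hk' ▸ hv k hk)

theorem contains_p321_iff {N : ℕ} (x : Equiv.Perm (Fin N)) :
    Contains x p321 ↔ ∃ a b c, a < b ∧ b < c ∧ x b < x a ∧ x c < x b := by
  constructor
  · rintro ⟨f, hf, h⟩
    exact ⟨f 0, f 1, f 2, hf (by decide), hf (by decide), (h 1 0).2 (by decide),
      (h 2 1).2 (by decide)⟩
  · rintro ⟨a, b, c, hab, hbc, hba, hcb⟩
    refine ⟨![a, b, c], ?_, ?_⟩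
    · intro i j hij
      fin_cases i <;> fin_cases j <;> simp_all
      exact hab.trans hbc
    · intro i j
      have := hcb.trans hba
      fin_cases i <;> fin_cases j <;> simp [p321, *, le_of_lt]

/-- Position `i` is a record exactly when `Q` does not take the value `Q(x)(i)` further right. -/
theorem record_iff {N : ℕ} (x : Equiv.Perm (Fin N)) (i : Fin N) :
    x i = Qmap x i ↔ ∀ j, i < j → Qmap x j ≠ Qmap x i := by
  constructor
  · intro h j hij hj
    obtain ⟨k, hk, hk'⟩ := exists_Qmap x j
    have : k = i := x.injective (by rw [hk', hj, h])
    exact absurd hk (by rw [this]; exact not_le.2 hij)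
  · intro h
    obtain ⟨j, hj, hj'⟩ := exists_Qmap x i
    rcases hj.eq_or_lt with rfl | hlt
    · exact hj'
    · exact absurd (Qmap_eq x le_rfl hj' fun k hk => Qmap_le x (hj.trans hk)) (h j hlt)

/-- In a `[321]`-avoiding permutation, no inversion ends at a non-record. -/
theorem lt_of_avoids {N : ℕ} {x : Equiv.Perm (Fin N)} (hx : ¬ Contains x p321) {i j : Fin N}
    (hij : i < j) (hj : x j ≠ Qmap x j) : x i < x j := by
  by_contra h
  have hji : x j < x i := lt_of_le_of_ne (not_lt.1 h) (x.injective.ne hij.ne')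
  obtain ⟨k, hk, hk'⟩ := exists_Qmap x j
  have hjk : j < k := lt_of_le_of_ne hk (by rintro rfl; exact hj hk')
  exact hx ((contains_p321_iff x).2 ⟨i, j, k, hij, hjk, hji,
    hk' ▸ lt_of_le_of_ne (Qmap_le x le_rfl) (Ne.symm hj)⟩)

/-- Induction step of uniqueness: if `y` and `z` agree left of `i`, then the value `y i`,
were it smaller than `z i`, would have to occur in `z` left of `i`. -/
theorem not_lt_of_agree {N : ℕ} {y z : Equiv.Perm (Fin N)} (hz : ¬ Contains z p321)
    (hQ : Qmap y = Qmap z) (i : Fin N) (hi : ∀ k < i, y k = z k) : ¬ y i < z i := by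
  intro h
  have hrec : ∀ k, z k = Qmap z k → y k = z k := fun k hk => by
    have := (record_iff z k).1 hk
    rw [← hQ] at this
    rw [(record_iff y k).2 this, hk, hQ]
  obtain ⟨k, hk⟩ := z.surjective (y i)
  have hki : k ≠ i := by rintro rfl; exact h.ne hk.symm
  have hne : y k ≠ z k := fun h' => hki (y.injective (h'.trans hk))
  rcases lt_or_gt_of_ne hki with hlt | hgt
  · exact hne (hi k hlt)
  · have := lt_of_avoids hz hgt fun h' => hne (hrec k h')
    rw [hk] at this
    exact lt_asymm h this

theorem eq_of_avoids {N : ℕ} {y z : Equiv.Perm (Fin N)} (hy : ¬ Contains y p321)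
    (hz : ¬ Contains z p321) (hQ : Qmap y = Qmap z) : y = z := by
  have key : ∀ i, y i = z i := fun i => by
    induction i using WellFoundedLT.induction with
    | ind i ih =>
      exact le_antisymm (not_lt.1 (not_lt_of_agree hy hQ.symm i fun k hk => (ih k hk).symm))
        (not_lt.1 (not_lt_of_agree hz hQ i ih))
  exact Equiv.ext key

theorem Qmap_mul_swap {N : ℕ} (y : Equiv.Perm (Fin N)) {a b c : Fin N} (hab : a < b)
    (hbc : b < c) (hba : y b < y a) (hcb : y c < y b) :
    Qmap (y * Equiv.swap a b) = Qmap y := by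
  funext i
  obtain ⟨j, hj, hj'⟩ := exists_Qmap y i
  have hjb : j ≠ b := by
    rintro rfl
    exact absurd (Qmap_le y (hj.trans hbc.le)) (by rw [← hj']; exact not_le.2 hcb)
  have hja : j ≠ a := by
    rintro rfl
    exact absurd (Qmap_le y (hj.trans hab.le)) (by rw [← hj']; exact not_le.2 hba)
  refine Qmap_eq _ hj ?_ fun k hk => ?_
  · rw [Equiv.Perm.mul_apply, Equiv.swap_apply_of_ne_of_ne hja hjb, hj']
  · rw [Equiv.Perm.mul_apply]
    by_cases hka : k = a
    · rw [hka, Equiv.swap_apply_left]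
      exact Qmap_le y (hk.trans (hka ▸ hab.le))
    · by_cases hkb : k = b
      · rw [hkb, Equiv.swap_apply_right]
        exact (Qmap_le y (hkb ▸ hk)).trans hba.le
      · rw [Equiv.swap_apply_of_ne_of_ne hka hkb]
        exact Qmap_le y hk

/-- With `s = swap a b`, the inversions `(p, q)` of `y * s` inject into those of `y` by
`(s p, s q)` if this pair is increasing and `(p, q)` otherwise; the image misses `(a, b)`. -/
theorem len_mul_swap_lt {N : ℕ} (y : Equiv.Perm (Fin N)) {a b : Fin N} (hab : a < b)
    (hba : y b < y a) : len (y * Equiv.swap a b) < len y := by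
  unfold len
  set s := Equiv.swap a b with hs
  have hss : ∀ p, s (s p) = p := fun p => Equiv.swap_apply_self a b p
  have hsd : ∀ p, s p = if p = a then b else if p = b then a else p :=
    fun p => Equiv.swap_apply_def a b p
  let φ : Fin N × Fin N → Fin N × Fin N :=
    fun p => if s p.1 < s p.2 then (s p.1, s p.2) else p
  let I := Finset.univ.filter fun p : Fin N × Fin N => p.1 < p.2 ∧ y p.2 < y p.1
  have hmem : (a, b) ∈ I := by simp [I, hab, hba]
  refine lt_of_le_of_lt (Finset.card_le_card_of_injOn (t := I.erase (a, b)) φ ?_ ?_)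
    (Finset.card_erase_lt_of_mem hmem)
  · rintro ⟨p, q⟩ h
    have h : p < q ∧ y (s q) < y (s p) := (Finset.mem_filter.1 h).2
    obtain ⟨hpq, hinv⟩ := h
    by_cases hc : s p < s q
    · have : (s p, s q) ≠ (a, b) := by
        grind
      simpa [φ, hc, I, hinv] using this
    · have h1 := hsd p
      have h2 := hsd q
      -- Here `p = a` and `q ≤ b`, or `q = b` and `a ≤ p`; the pair `(a, b)` itself is not an
      -- inversion of `y * s`, and in the other cases `y b < y a` gives the inversion of `y`.
      have h3 : y q < y p ∧ (p, q) ≠ (a, b) := by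
        grind
      simpa [φ, hc, I, hpq, h3.1] using h3.2
  · rintro ⟨p, q⟩ h ⟨p', q'⟩ h' heq
    have h : p < q := (Finset.mem_filter.1 h).2.1
    have h' : p' < q' := (Finset.mem_filter.1 h').2.1
    have e1 := hss p
    have e2 := hss q
    have e3 := hss p'
    have e4 := hss q'
    simp only [φ] at heq
    grind

theorem stmt7 (N : ℕ) (hN : 1 ≤ N) (x : Equiv.Perm (Fin N)) :
    (∃! y : Equiv.Perm (Fin N), ¬ Contains y p321 ∧ Qmap y = Qmap x) ∧
    (∀ y : Equiv.Perm (Fin N), ¬ Contains y p321 → Qmap y = Qmap x →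
      ∀ x' : Equiv.Perm (Fin N), Qmap x' = Qmap x → len y ≤ len x') := by
  obtain ⟨y, hyQ, hmin⟩ := Set.exists_min_image {y : Equiv.Perm (Fin N) | Qmap y = Qmap x} len
    (Set.toFinite _) ⟨x, rfl⟩
  have hy : ¬ Contains y p321 := by
    rw [contains_p321_iff]
    rintro ⟨a, b, c, hab, hbc, hba, hcb⟩
    exact absurd (hmin _ ((Qmap_mul_swap y hab hbc hba hcb).trans hyQ))
      (not_le.2 (len_mul_swap_lt y hab hba))
  have huniq : ∀ z : Equiv.Perm (Fin N), ¬ Contains z p321 → Qmap z = Qmap x → z = y :=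
    fun z hz hzQ => eq_of_avoids hz hy (hzQ.trans (Eq.symm hyQ))
  refine ⟨⟨y, ⟨hy, hyQ⟩, fun z hz => huniq z hz.1 hz.2⟩, fun z hz hzQ x' hx' => ?_⟩
  rw [huniq z hz hzQ]
  exact hmin x' hx'
end

section
/- Let N ≥ 1 and x ∈ S_N, and let (p, q, r) with p < q < r be positions of a [231]-pattern in x (so x(r) < x(p) < x(q)) such that the pair (r−p, q−p) is lexicographically minimal among all triples of positions of [231]-patterns in x. Let x' = x ∘ τ_{p,q}, where τ_{p,q} is the transposition of p and q (so x' is x with its entries in positions p and q exchanged). Then Q(x') = Q(x), ℓ(x') = ℓ(x) + 1, and (p, q, r) are positions of a [321]-pattern in x' (i.e. x'(p) > x'(q) > x'(r)). -/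
theorem Qmap_le_of_dominated {N : ℕ} (x y : Equiv.Perm (Fin N)) (i : Fin N)
    (h : ∀ j, i ≤ j → ∃ k, i ≤ k ∧ y k ≤ x j) : Qmap y i ≤ Qmap x i := by
  unfold Qmap
  refine Finset.le_min' _ _ _ fun a ha => ?_
  obtain ⟨j, hj, rfl⟩ := Finset.mem_image.mp ha
  obtain ⟨k, hk, hle⟩ := h j (by simpa using hj)
  exact (Finset.min'_le _ _ (Finset.mem_image_of_mem y (by simpa using hk))).trans hle

/-- If all entries strictly between positions `p < q` are below `x p < x q`, then exchanging
positions `p` and `q` creates exactly one inversion. The map sending a pair `(i, j)` to its image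
under the transposition when this preserves the order of the pair, and to itself otherwise, is an
involution matching the inversions of `x` with those of the new permutation other than `(p, q)`. -/
theorem len_mul_swap {N : ℕ} (x : Equiv.Perm (Fin N)) {p q : Fin N} (hpq : p < q)
    (h2 : x p < x q) (hmid : ∀ k, p < k → k < q → x k < x p) :
    len (x * Equiv.swap p q) = len x + 1 := by
  have hmem : (p, q) ∈ Finset.univ.filter fun a : Fin N × Fin N =>
      a.1 < a.2 ∧ (x * Equiv.swap p q) a.2 < (x * Equiv.swap p q) a.1 := by
    exact Finset.mem_filter.mpr ⟨Finset.mem_univ _, hpq, by simpa using h2⟩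
  unfold len
  rw [← Finset.card_erase_add_one hmem]
  congr 1
  let φ : Fin N × Fin N → Fin N × Fin N := fun a =>
    if Equiv.swap p q a.1 < Equiv.swap p q a.2 then (Equiv.swap p q a.1, Equiv.swap p q a.2) else a
  have hφ : ∀ a : Fin N × Fin N, a.1 < a.2 → φ (φ a) = a := by
    rintro ⟨i, j⟩ hij
    simp only at hij
    by_cases hs : Equiv.swap p q i < Equiv.swap p q j <;> simp [φ, hs, hij]
  have sp : Equiv.swap p q p = q := Equiv.swap_apply_left p q
  have sq : Equiv.swap p q q = p := Equiv.swap_apply_right p q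
  have sk : ∀ k, k ≠ p → k ≠ q → Equiv.swap p q k = k := fun k hp hq =>
    Equiv.swap_apply_of_ne_of_ne hp hq
  have hss : ∀ k, Equiv.swap p q (Equiv.swap p q k) = k := Equiv.swap_apply_self p q
  have hrev : ∀ i j : Fin N, i < j → ¬ Equiv.swap p q i < Equiv.swap p q j →
      (i = p ∧ j = q) ∨ (i = p ∧ p < j ∧ j < q) ∨ (j = q ∧ p < i ∧ i < q) := by
    intro i j hij hs
    rw [Equiv.swap_apply_def, Equiv.swap_apply_def] at hs
    split_ifs at hs <;> omega
  have hfwd : ∀ i j : Fin N, i < j → x j < x i → (φ (i, j)).1 < (φ (i, j)).2 ∧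
      x (Equiv.swap p q (φ (i, j)).2) < x (Equiv.swap p q (φ (i, j)).1) := by
    intro i j hij hx
    by_cases hs : Equiv.swap p q i < Equiv.swap p q j
    · simp only [φ, if_pos hs, hss]
      exact ⟨hs, hx⟩
    · simp only [φ, if_neg hs]
      refine ⟨hij, ?_⟩
      rcases hrev i j hij hs with ⟨rfl, rfl⟩ | ⟨rfl, hj, hj'⟩ | ⟨rfl, hi, hi'⟩
      · exact absurd hx h2.not_gt
      · rw [sp, sk j hj.ne' hj'.ne]
        exact hx.trans h2
      · exact absurd (hx.trans (hmid i hi hi')) h2.not_gt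
  have hbwd : ∀ i j : Fin N, i < j → (i, j) ≠ (p, q) →
      x (Equiv.swap p q j) < x (Equiv.swap p q i) →
      (φ (i, j)).1 < (φ (i, j)).2 ∧ x (φ (i, j)).2 < x (φ (i, j)).1 := by
    intro i j hij hne hx
    by_cases hs : Equiv.swap p q i < Equiv.swap p q j
    · simp only [φ, if_pos hs]
      exact ⟨hs, hx⟩
    · simp only [φ, if_neg hs]
      refine ⟨hij, ?_⟩
      rcases hrev i j hij hs with ⟨rfl, rfl⟩ | ⟨rfl, hj, hj'⟩ | ⟨rfl, hi, hi'⟩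
      · exact absurd rfl hne
      · exact hmid j hj hj'
      · rw [sq, sk i hi.ne' hi'.ne] at hx
        exact absurd hx (hmid i hi hi').not_gt
  refine (Finset.card_bij' (fun a _ => φ a) (fun a _ => φ a) ?_ ?_ ?_ ?_).symm
  · rintro ⟨i, j⟩ ha
    have ha' := (Finset.mem_filter.mp ha).2
    refine Finset.mem_erase.mpr ⟨?_, Finset.mem_filter.mpr ⟨Finset.mem_univ _, ?_⟩⟩
    · intro h
      have hpre := hφ (i, j) ha'.1
      have hfix : φ (p, q) = (p, q) := by simp [φ, hpq.not_gt]
      rw [h, hfix, Prod.mk.injEq] at hpre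
      exact absurd ha'.2 (by rw [← hpre.1, ← hpre.2]; exact h2.not_gt)
    · exact hfwd i j ha'.1 ha'.2
  · rintro ⟨i, j⟩ ha
    obtain ⟨hne, ha⟩ := Finset.mem_erase.mp ha
    have ha' := (Finset.mem_filter.mp ha).2
    exact Finset.mem_filter.mpr ⟨Finset.mem_univ _, hbwd i j ha'.1 hne ha'.2⟩
  · intro a ha
    exact hφ a (Finset.mem_filter.mp ha).2.1
  · intro a ha
    exact hφ a (Finset.mem_filter.mp (Finset.mem_erase.mp ha).2).2.1

theorem stmt10 (N : ℕ) (hN : 1 ≤ N) (x : Equiv.Perm (Fin N)) (p q r : Fin N)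
    (hpq : p < q) (hqr : q < r) (h1 : x r < x p) (h2 : x p < x q)
    (hmin : ∀ p' q' r' : Fin N, p' < q' → q' < r' → x r' < x p' → x p' < x q' →
      r.val - p.val < r'.val - p'.val ∨
        (r.val - p.val = r'.val - p'.val ∧ q.val - p.val ≤ q'.val - p'.val)) :
    Qmap (x * Equiv.swap p q) = Qmap x ∧
    len (x * Equiv.swap p q) = len x + 1 ∧
    (x * Equiv.swap p q) q < (x * Equiv.swap p q) p ∧
    (x * Equiv.swap p q) r < (x * Equiv.swap p q) q := by
  have hyp : (x * Equiv.swap p q) p = x q := by simp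
  have hyq : (x * Equiv.swap p q) q = x p := by simp
  have hyk : ∀ k, k ≠ p → k ≠ q → (x * Equiv.swap p q) k = x k := by
    intro k hp hq
    simp [Equiv.swap_apply_of_ne_of_ne hp hq]
  -- An entry above `x p` strictly between `p` and `q` would replace `q` and shrink `q - p`.
  have hmid : ∀ k, p < k → k < q → x k < x p := by
    intro k hpk hkq
    by_contra hlt
    have hne : x k ≠ x p := fun h => hpk.ne' (x.injective h)
    have := hmin p k r hpk (hkq.trans hqr) h1 (lt_of_le_of_ne (not_lt.mp hlt) hne.symm)
    rw [Fin.lt_def] at hpk hkq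
    omega
  have hyr : (x * Equiv.swap p q) r = x r := hyk r (hpq.trans hqr).ne' hqr.ne'
  refine ⟨?_, len_mul_swap x hpq h2 hmid, by rw [hyp, hyq]; exact h2,
    by rw [hyq, hyr]; exact h1⟩
  funext i
  apply le_antisymm
  · refine Qmap_le_of_dominated _ _ i fun j hj => ?_
    by_cases hjp : j = p
    · subst hjp
      exact ⟨r, hj.trans (hpq.trans hqr).le, by rw [hyr]; exact h1.le⟩
    by_cases hjq : j = q
    · subst hjq
      exact ⟨j, hj, by rw [hyq]; exact h2.le⟩
    · exact ⟨j, hj, (hyk j hjp hjq).le⟩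
  · refine Qmap_le_of_dominated _ _ i fun j hj => ?_
    by_cases hjp : j = p
    · subst hjp
      exact ⟨q, hj.trans hpq.le, hyp.ge⟩
    by_cases hjq : j = q
    · subst hjq
      exact ⟨r, hj.trans hqr.le, by rw [hyq]; exact h1.le⟩
    · exact ⟨j, hj, (hyk j hjp hjq).ge⟩
end

section
/- Let N ≥ 1 and x ∈ S_N. Then there is exactly one permutation y ∈ S_N that avoids the pattern [4321] and satisfies both Q(y) = Q(x) and R(y) = R(x). (That is, each fiber of the map ω : x ↦ (Q(x), R(x)) contains a unique [4321]-avoiding permutation.) -/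
/-- `R(x) = Q(w₀ ∘ x ∘ w₀)`, where `w₀` is the longest element. -/
def Rmap {N : ℕ} (x : Equiv.Perm (Fin N)) : Fin N → Fin N :=
  Qmap (Fin.revPerm * x * Fin.revPerm)

/-- The pattern [4321]. -/
def p4321 : Equiv.Perm (Fin 4) := ⟨![3, 2, 1, 0], ![3, 2, 1, 0], by decide, by decide⟩

theorem Qmap_eq_iff {N : ℕ} (x : Equiv.Perm (Fin N)) (i v : Fin N) :
    Qmap x i = v ↔ (∃ j, i ≤ j ∧ x j = v) ∧ ∀ j, i ≤ j → v ≤ x j := by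
  exact (Finset.min'_eq_iff _ _ _).trans (by simp)

/-- `Rmap x` at the reversed index is the reversed maximum of the prefix of `x` ending at `i`. -/
theorem Rmap_eq_iff {N : ℕ} (x : Equiv.Perm (Fin N)) (i v : Fin N) :
    Rmap x i.rev = v.rev ↔ (∃ j, j ≤ i ∧ x j = v) ∧ ∀ j, j ≤ i → x j ≤ v := by
  unfold Rmap
  rw [Qmap_eq_iff]
  simp only [Equiv.Perm.mul_apply, Fin.revPerm_apply, Fin.rev_inj, Fin.rev_le_rev]
  constructor
  · rintro ⟨⟨j, hj, h⟩, h'⟩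
    refine ⟨⟨j.rev, Fin.rev_le_iff.mpr hj, h⟩, fun k hk => ?_⟩
    simpa using h' k.rev (Fin.rev_le_rev.mpr hk)
  · rintro ⟨⟨j, hj, h⟩, h'⟩
    exact ⟨⟨j.rev, Fin.rev_le_rev.mpr hj, by simpa using h⟩,
      fun k hk => h' _ (Fin.rev_le_iff.mpr hk)⟩

theorem contains_p4321_iff {N : ℕ} (y : Equiv.Perm (Fin N)) :
    Contains y p4321 ↔
      ∃ a b c d, a < b ∧ b < c ∧ c < d ∧ y b < y a ∧ y c < y b ∧ y d < y c := by
  constructor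
  · rintro ⟨f, hf, h⟩
    exact ⟨f 0, f 1, f 2, f 3, hf (by decide), hf (by decide), hf (by decide),
      (h _ _).2 (by decide), (h _ _).2 (by decide), (h _ _).2 (by decide)⟩
  · rintro ⟨a, b, c, d, hab, hbc, hcd, h1, h2, h3⟩
    refine ⟨![a, b, c, d], ?_, ?_⟩
    · rw [Fin.strictMono_iff_lt_succ]
      intro i
      fin_cases i <;> simpa
    · intro i j
      fin_cases i <;> fin_cases j <;> simp [p4321] <;> order

/-- Exchanging two values does not change the suffix minima when both exceed a later value: in this
case neither of them is ever a suffix minimum. -/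
theorem Qmap_swap {N : ℕ} (y : Equiv.Perm (Fin N)) {b c d : Fin N} (hbc : b < c) (hcd : c < d)
    (h2 : y c < y b) (h3 : y d < y c) : Qmap (y * Equiv.swap b c) = Qmap y := by
  funext i
  rw [Qmap_eq_iff]
  obtain ⟨⟨j, hij, hj⟩, hmin⟩ := (Qmap_eq_iff y i _).1 rfl
  constructor
  · refine ⟨j, hij, ?_⟩
    have hjb : j ≠ b := by
      rintro rfl
      have := hmin d (by order)
      order
    have hjc : j ≠ c := by
      rintro rfl
      have := hmin d (by order)
      order
    rw [Equiv.Perm.mul_apply, Equiv.swap_apply_of_ne_of_ne hjb hjc, hj]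
  · intro k hk
    rw [Equiv.Perm.mul_apply]
    by_cases hkb : k = b
    · subst hkb
      rw [Equiv.swap_apply_left]
      exact hmin c (by order)
    by_cases hkc : k = c
    · subst hkc
      rw [Equiv.swap_apply_right]
      have := hmin k hk
      order
    rw [Equiv.swap_apply_of_ne_of_ne hkb hkc]
    exact hmin k hk

/-- The mirror image of `Qmap_swap` under conjugation by the longest element. -/
theorem Rmap_swap {N : ℕ} (y : Equiv.Perm (Fin N)) {a b c : Fin N} (hab : a < b) (hbc : b < c)
    (h1 : y b < y a) (h2 : y c < y b) : Rmap (y * Equiv.swap b c) = Rmap y := by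
  have key : Fin.revPerm * (y * Equiv.swap b c) * Fin.revPerm
      = (Fin.revPerm * y * Fin.revPerm) * Equiv.swap c.rev b.rev := by
    have : Equiv.swap b c * Fin.revPerm = Fin.revPerm * Equiv.swap c.rev b.rev := by
      rw [Equiv.mul_swap_eq_swap_mul]
      simp [Equiv.swap_comm]
    simp only [mul_assoc, this]
  unfold Rmap
  rw [key]
  exact Qmap_swap _ (d := a.rev) (by simpa) (by simpa) (by simpa) (by simpa)

theorem swap_lex_lt {N : ℕ} (y : Equiv.Perm (Fin N)) {b c : Fin N} (hbc : b < c)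
    (h : y c < y b) : toLex (⇑(y * Equiv.swap b c)) < toLex (⇑y) := by
  refine ⟨b, fun j hj => ?_, ?_⟩
  · change y (Equiv.swap b c j) = y j
    rw [Equiv.swap_apply_of_ne_of_ne hj.ne (hj.trans hbc).ne]
  · change y (Equiv.swap b c b) < y b
    rwa [Equiv.swap_apply_left]

/-- At the first position where two permutations of the same fiber differ, the one with the larger
value contains `4321`. -/
theorem contains_of_lt {N : ℕ} (y z : Equiv.Perm (Fin N)) (hQ : Qmap y = Qmap z)
    (hR : Rmap y = Rmap z) (p : Fin N) (hp : ∀ j < p, y j = z j) (hlt : z p < y p) :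
    Contains y p4321 := by
  obtain ⟨q, hq⟩ := y.surjective (z p)
  have hpq : p < q := by
    rcases lt_trichotomy p q with h | rfl | h
    · exact h
    · order
    · exact absurd (z.injective ((hp q h).symm.trans hq)) h.ne
  have ha : ∃ a < p, y p < y a := by
    by_contra! hno
    have h : Rmap y p.rev = (y p).rev := (Rmap_eq_iff y p _).2
      ⟨⟨p, le_rfl, rfl⟩, fun j hj => hj.eq_or_lt.elim (fun e => e ▸ le_rfl) (hno j)⟩
    rw [hR, Rmap_eq_iff] at h
    obtain ⟨⟨j, hj, hjv⟩, -⟩ := h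
    rcases hj.eq_or_lt with rfl | hj
    · order
    · exact hj.ne (y.injective ((hp j hj).trans hjv))
  have hd : ∃ d, q < d ∧ y d < y q := by
    by_contra! hno
    have h : Qmap y q = y q := (Qmap_eq_iff y q _).2
      ⟨⟨q, le_rfl, rfl⟩, fun j hj => hj.eq_or_lt.elim (fun e => e ▸ le_rfl) (hno j)⟩
    rw [hQ, Qmap_eq_iff] at h
    obtain ⟨⟨j, hj, hjv⟩, -⟩ := h
    have := z.injective (hjv.trans hq)
    order
  obtain ⟨a, hap, hya⟩ := ha
  obtain ⟨d, hqd, hyd⟩ := hd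
  exact (contains_p4321_iff y).2 ⟨a, p, q, d, hap, hpq, hqd, hya, hq ▸ hlt, hyd⟩

theorem stmt11 (N : ℕ) (hN : 1 ≤ N) (x : Equiv.Perm (Fin N)) :
    ∃! y : Equiv.Perm (Fin N), ¬ Contains y p4321 ∧ Qmap y = Qmap x ∧ Rmap y = Rmap x := by
  classical
  apply existsUnique_of_exists_of_unique
  · obtain ⟨y, hy, hmin⟩ := Finset.exists_min_image
      (Finset.univ.filter fun y : Equiv.Perm (Fin N) => Qmap y = Qmap x ∧ Rmap y = Rmap x)
      (fun y => toLex (⇑y)) ⟨x, by simp⟩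
    simp only [Finset.mem_filter, Finset.mem_univ, true_and] at hy hmin
    refine ⟨y, fun hc => ?_, hy⟩
    obtain ⟨a, b, c, d, hab, hbc, hcd, h1, h2, h3⟩ := (contains_p4321_iff y).1 hc
    exact (swap_lex_lt y hbc h2).not_ge (hmin _
      ⟨(Qmap_swap y hbc hcd h2 h3).trans hy.1, (Rmap_swap y hab hbc h1 h2).trans hy.2⟩)
  · rintro y z ⟨hy, hyQ, hyR⟩ ⟨hz, hzQ, hzR⟩
    by_contra hne
    -- The lexicographic order is total; its strict comparison yields the first differing position.
    have hne' : toLex (⇑y) ≠ toLex (⇑z) := fun h => hne (DFunLike.coe_injective (toLex.injective h))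
    rcases lt_or_gt_of_ne hne' with ⟨p, hp, hlt⟩ | ⟨p, hp, hlt⟩
    · exact hz (contains_of_lt z y (hzQ.trans hyQ.symm) (hzR.trans hyR.symm) p
        (fun j hj => (hp j hj).symm) hlt)
    · exact hy (contains_of_lt y z (hyQ.trans hzQ.symm) (hyR.trans hzR.symm) p
        (fun j hj => (hp j hj).symm) hlt)
end
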